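/- arXiv:1911.10481 — 2 statements merged into one kernel-verified Lean document; each statement's English description precedes it below -/
import Mathlib

section
/- Let λ ≥ 0 and F(k) = (2/3)(2π)⁻³ χ(|k|)² |k| for k ∈ ℝ³. Then lim_{ε→0⁺} ∫_{ℝ³×(0,∞)} F(k) cos(t(|k| + λ)) e^{−εt} dk dt = 0. -/
noncomputable section
open MeasureTheory

/-- `F(k) = (2/3)(2π)⁻³ χ(|k|)² |k|`. -/
def F (χ : SchwartzMap ℝ ℝ) (k : EuclideanSpace ℝ (Fin 3)) : ℝ :=
  (2 / 3) * ((2 * Real.pi) ^ 3)⁻¹ * (χ ‖k‖) ^ 2 * ‖k‖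

/-! Integrating in time first turns the oscillating factor into the Poisson-type kernel
`ε / (ε² + ω²)`. By AM-GM this kernel is at most `1 / |ω|`, uniformly in `ε`, and it tends to zero
wherever `ω ≠ 0`; dominated convergence with majorant `|f / ω|` concludes. For `F` and
`ω = |k| + λ`, the factor `|k|` in `F` cancels the only possible singularity of `1 / ω`. -/

open Filter Set
open scoped Topology SchwartzMap

theorem integral_cos_mul_exp_neg_mul_Ioi {ε : ℝ} (hε : 0 < ε) (a : ℝ) :
    ∫ t in Ioi (0 : ℝ), Real.cos (t * a) * Real.exp (-ε * t) = ε / (ε ^ 2 + a ^ 2) := by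
  have hre : (-ε + a * Complex.I : ℂ).re < 0 := by simp [hε]
  have hcos (t : ℝ) : Real.cos (t * a) * Real.exp (-ε * t) =
      RCLike.re (Complex.exp ((-ε + a * Complex.I) * t)) := by
    simp [Complex.exp_re, mul_comm]
  calc ∫ t in Ioi (0 : ℝ), Real.cos (t * a) * Real.exp (-ε * t)
      = RCLike.re (∫ t in Ioi (0 : ℝ), Complex.exp ((-ε + a * Complex.I) * t)) := by
        simp_rw [hcos]
        exact integral_re (integrableOn_exp_mul_complex_Ioi hre 0)
    _ = (-1 / (-ε + a * Complex.I)).re := by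
        simp [integral_exp_mul_complex_Ioi hre 0]
    _ = ε / (ε ^ 2 + a ^ 2) := by
        simp [Complex.div_re, Complex.normSq_apply, sq]

theorem abs_div_sq_add_sq_le_abs_inv {a : ℝ} (ha : a ≠ 0) (ε : ℝ) :
    |ε / (ε ^ 2 + a ^ 2)| ≤ |a⁻¹| := by
  have hamgm : 2 * |ε| * |a| ≤ ε ^ 2 + a ^ 2 := by
    simpa only [sq_abs] using two_mul_le_add_sq |ε| |a|
  have hpos : 0 < ε ^ 2 + a ^ 2 := by positivity
  rw [abs_div, abs_of_pos hpos, abs_inv, div_le_iff₀ hpos, inv_mul_eq_div,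
    le_div_iff₀ (abs_pos.2 ha)]
  linarith [mul_nonneg (abs_nonneg ε) (abs_nonneg a)]

theorem tendsto_div_sq_add_sq_nhds_zero {a : ℝ} (ha : a ≠ 0) :
    Tendsto (fun ε : ℝ => ε / (ε ^ 2 + a ^ 2)) (𝓝 0) (𝓝 0) := by
  have hcont : ContinuousAt (fun ε : ℝ => ε / (ε ^ 2 + a ^ 2)) 0 :=
    continuousAt_id.div (by fun_prop) (by positivity)
  simpa only [zero_div] using hcont.tendsto

section AbelMean

variable {X : Type*} [MeasurableSpace X] {μ : Measure X} {f ω : X → ℝ}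

theorem integrableOn_mul_cos_mul_exp_neg [SFinite μ] (hf : Integrable f μ)
    (hω : AEMeasurable ω μ) {ε : ℝ} (hε : 0 < ε) :
    IntegrableOn (fun p : X × ℝ => f p.1 * Real.cos (p.2 * ω p.1) * Real.exp (-ε * p.2))
      (univ ×ˢ Ioi 0) (μ.prod volume) := by
  rw [IntegrableOn, ← Measure.prod_restrict, Measure.restrict_univ]
  have hcos : AEStronglyMeasurable (fun p : X × ℝ => Real.cos (p.2 * ω p.1))
      (μ.prod (volume.restrict (Ioi 0))) :=
    (Real.measurable_cos.comp_aemeasurable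
      (measurable_snd.aemeasurable.mul hω.comp_fst)).aestronglyMeasurable
  have hdecay : Integrable (fun p : X × ℝ => f p.1 * Real.exp (-ε * p.2))
      (μ.prod (volume.restrict (Ioi 0))) :=
    hf.mul_prod (exp_neg_integrableOn_Ioi 0 hε)
  refine (hdecay.mul_bdd (c := 1) hcos (.of_forall fun _ => Real.abs_cos_le_one _)).congr
    (.of_forall fun _ => ?_)
  exact mul_right_comm _ _ _

theorem setIntegral_mul_cos_mul_exp_neg [SFinite μ] (hf : Integrable f μ)
    (hω : AEMeasurable ω μ) {ε : ℝ} (hε : 0 < ε) :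
    ∫ p in univ ×ˢ Ioi (0 : ℝ), f p.1 * Real.cos (p.2 * ω p.1) * Real.exp (-ε * p.2)
        ∂μ.prod volume =
      ∫ x, f x * (ε / (ε ^ 2 + ω x ^ 2)) ∂μ := by
  rw [setIntegral_prod _ (integrableOn_mul_cos_mul_exp_neg hf hω hε), setIntegral_univ]
  simp only [mul_assoc, integral_const_mul, integral_cos_mul_exp_neg_mul_Ioi hε]

theorem tendsto_integral_mul_div_sq_add_sq (hf : AEStronglyMeasurable f μ)
    (hω : AEMeasurable ω μ) (hω₀ : ∀ᵐ x ∂μ, ω x ≠ 0)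
    (hfω : Integrable (fun x => f x / ω x) μ) :
    Tendsto (fun ε : ℝ => ∫ x, f x * (ε / (ε ^ 2 + ω x ^ 2)) ∂μ) (𝓝 0) (𝓝 0) := by
  suffices h : Tendsto (fun ε : ℝ => ∫ x, f x * (ε / (ε ^ 2 + ω x ^ 2)) ∂μ) (𝓝 0)
      (𝓝 (∫ _, 0 ∂μ)) by
    simpa only [integral_zero] using h
  refine tendsto_integral_filter_of_dominated_convergence (fun x => ‖f x / ω x‖)
    (.of_forall fun ε => ?_) (.of_forall fun ε => ?_) hfω.norm ?_
  · exact hf.mul (aemeasurable_const.div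
      (aemeasurable_const.add (hω.pow_const 2))).aestronglyMeasurable
  · filter_upwards [hω₀] with x hx
    rw [div_eq_mul_inv (f x), norm_mul, norm_mul]
    gcongr
    exact abs_div_sq_add_sq_le_abs_inv hx ε
  · filter_upwards [hω₀] with x hx
    simpa only [mul_zero] using (tendsto_div_sq_add_sq_nhds_zero hx).const_mul (f x)

theorem stmt5_general [SFinite μ] (hf : Integrable f μ) (hω : AEMeasurable ω μ)
    (hω₀ : ∀ᵐ x ∂μ, ω x ≠ 0) (hfω : Integrable (fun x => f x / ω x) μ) :
    Tendsto
      (fun ε : ℝ =>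
        ∫ p in univ ×ˢ Ioi (0 : ℝ), f p.1 * Real.cos (p.2 * ω p.1) * Real.exp (-ε * p.2)
          ∂μ.prod volume)
      (𝓝[>] 0) (𝓝 0) := by
  refine ((tendsto_integral_mul_div_sq_add_sq hf.1 hω hω₀ hfω).mono_left
    nhdsWithin_le_nhds).congr' ?_
  filter_upwards [self_mem_nhdsWithin] with ε hε
  exact (setIntegral_mul_cos_mul_exp_neg hf hω hε).symm

end AbelMean

section Radial

variable {E G : Type*} [NormedAddCommGroup E] [NormedSpace ℝ E] [FiniteDimensional ℝ E]
  [MeasurableSpace E] [BorelSpace E] [Nontrivial E] {μ : Measure E} [μ.IsAddHaarMeasure]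
  [NormedAddCommGroup G] [NormedSpace ℝ G]

theorem integrable_schwartzMap_comp_norm (φ : 𝓢(ℝ, G)) :
    Integrable (fun x : E => φ ‖x‖) μ := by
  rw [integrable_fun_norm_addHaar μ]
  have hpow : (fun y : ℝ => y ^ (Module.finrank ℝ E - 1)).HasTemperateGrowth := by fun_prop
  simpa only [SchwartzMap.smulLeftCLM_apply hpow] using
    (SchwartzMap.smulLeftCLM G (fun y : ℝ => y ^ (Module.finrank ℝ E - 1))
      φ).integrable.integrableOn

theorem integrable_smul_schwartzMap_comp_norm {g : ℝ → ℝ}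
    (hg : g.HasTemperateGrowth) (φ : 𝓢(ℝ, G)) :
    Integrable (fun x : E => g ‖x‖ • φ ‖x‖) μ := by
  simpa only [SchwartzMap.smulLeftCLM_apply_apply hg] using
    integrable_schwartzMap_comp_norm (SchwartzMap.smulLeftCLM G g φ)

end Radial

theorem ae_norm_add_ne_zero {E : Type*} [NormedAddCommGroup E] [MeasurableSpace E]
    (μ : Measure E) [NullSingletonClass μ] {lam : ℝ} (hlam : 0 ≤ lam) : ∀ᵐ x ∂μ, ‖x‖ + lam ≠ 0 := by
  filter_upwards [μ.ae_ne 0] with x hx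
  positivity

theorem integrable_F (χ : 𝓢(ℝ, ℝ)) : Integrable (F χ) := by
  have hg : (fun r : ℝ => 2 / 3 * ((2 * Real.pi) ^ 3)⁻¹ * χ r * r).HasTemperateGrowth := by
    have := χ.hasTemperateGrowth
    fun_prop
  refine (integrable_smul_schwartzMap_comp_norm hg χ).congr (.of_forall fun k => ?_)
  simp only [F, smul_eq_mul]
  ring

theorem integrable_F_div_norm_add (χ : 𝓢(ℝ, ℝ)) {lam : ℝ} (hlam : 0 ≤ lam) :
    Integrable (fun k => F χ k / (‖k‖ + lam)) := by
  have hg : (fun r : ℝ => 2 / 3 * ((2 * Real.pi) ^ 3)⁻¹ * χ r).HasTemperateGrowth := by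
    have := χ.hasTemperateGrowth
    fun_prop
  have hratio (k : EuclideanSpace ℝ (Fin 3)) : ‖‖k‖ / (‖k‖ + lam)‖ ≤ 1 := by
    rw [Real.norm_of_nonneg (by positivity)]
    exact div_le_one_of_le₀ (le_add_of_nonneg_right hlam) (by positivity)
  refine ((integrable_smul_schwartzMap_comp_norm hg χ).mul_bdd
    (by fun_prop : Measurable _).aestronglyMeasurable (.of_forall hratio)).congr
    (.of_forall fun k => ?_)
  simp only [F, smul_eq_mul]
  ring

theorem stmt5 (χ : SchwartzMap ℝ ℝ) (lam : ℝ) (hlam : 0 ≤ lam) :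
    Filter.Tendsto
      (fun ε : ℝ =>
        ∫ p : EuclideanSpace ℝ (Fin 3) × ℝ in Set.univ ×ˢ Set.Ioi (0 : ℝ),
          F χ p.1 * Real.cos (p.2 * (‖p.1‖ + lam)) * Real.exp (-ε * p.2))
      (nhdsWithin 0 (Set.Ioi 0)) (nhds 0) :=
  stmt5_general (ω := fun k => ‖k‖ + lam) (integrable_F χ) (by fun_prop)
    (ae_norm_add_ne_zero volume hlam) (integrable_F_div_norm_add χ hlam)
end
end

section
/- Let β > 0 and let L be the GKLS operator built from the concrete coefficients d₁, d₀, d₋₁. Then the linear map L : M₂(ℂ) → M₂(ℂ) has I, σ(1), σ(0) + I and σ(−1) as eigenvectors: L(I) = 0, and there exist complex numbers μ₁, μ₀, μ₋₁ with L(σ(1)) = μ₁ σ(1), L(σ(0) + I) = μ₀ (σ(0) + I), L(σ(−1)) = μ₋₁ σ(−1), such that Re μ₁ ≤ 0, Re μ₀ ≤ 0, Re μ₋₁ ≤ 0. If moreover χ(2β) > 0 (the Fermi Golden Rule hypothesis), then Re μ₁ < 0, Re μ₀ < 0 and Re μ₋₁ < 0. -/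
noncomputable section
open MeasureTheory Complex

def u (χ : SchwartzMap ℝ ℝ) (t : ℝ) : ℂ :=
  ((2 / (3 * (2 * Real.pi) ^ 3) : ℝ) : ℂ) *
    ∫ k : EuclideanSpace ℝ (Fin 3), (((χ ‖k‖) ^ 2 * ‖k‖ : ℝ) : ℂ) * Complex.exp (-(t * ‖k‖) * Complex.I)

/-- `d_m = ∫₀^∞ u(t) e^{2imβt} dt`. -/
def dcoef (χ : SchwartzMap ℝ ℝ) (β : ℝ) (m : ℤ) : ℂ :=
  ∫ t in Set.Ioi (0 : ℝ), u χ t * Complex.exp (2 * m * β * t * Complex.I)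

def σ1 : Matrix (Fin 2) (Fin 2) ℂ := !![0, 1; 1, 0]
def σ2 : Matrix (Fin 2) (Fin 2) ℂ := !![0, -Complex.I; Complex.I, 0]
def σ3 : Matrix (Fin 2) (Fin 2) ℂ := !![1, 0; 0, -1]

/-- `σ(m)` for `m ∈ {1, 0, -1}`. -/
def pσ (m : ℤ) : Matrix (Fin 2) (Fin 2) ℂ :=
  if m = 1 then ((Real.sqrt 2 : ℂ))⁻¹ • (σ1 + Complex.I • σ2)
  else if m = 0 then σ3
  else ((Real.sqrt 2 : ℂ))⁻¹ • (σ1 - Complex.I • σ2)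

/-- `H_L = Σ_m (Im d_m) σ(m)σ(−m)`. -/
def HL (d1 d0 dm1 : ℂ) : Matrix (Fin 2) (Fin 2) ℂ :=
  (d1.im : ℂ) • (pσ 1 * pσ (-1)) + (d0.im : ℂ) • (pσ 0 * pσ 0) +
    (dm1.im : ℂ) • (pσ (-1) * pσ 1)

/-- The GKLS operator built from `d₁, d₀, d₋₁`. -/
def Lop (d1 d0 dm1 : ℂ) (A : Matrix (Fin 2) (Fin 2) ℂ) : Matrix (Fin 2) (Fin 2) ℂ :=
  (d1.re : ℂ) • (pσ 1 * A * pσ (-1) -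
      (2 : ℂ)⁻¹ • (A * (pσ 1 * pσ (-1)) + (pσ 1 * pσ (-1)) * A)) +
    (d0.re : ℂ) • (pσ 0 * A * pσ 0 -
      (2 : ℂ)⁻¹ • (A * (pσ 0 * pσ 0) + (pσ 0 * pσ 0) * A)) +
    (dm1.re : ℂ) • (pσ (-1) * A * pσ 1 -
      (2 : ℂ)⁻¹ • (A * (pσ (-1) * pσ 1) + (pσ (-1) * pσ 1) * A)) -
    (Complex.I / 2) • (A * HL d1 d0 dm1 - HL d1 d0 dm1 * A)

/-!
Since `u(-t)` is the conjugate of `u(t)`, twice `Re d_m` is the integral of `u(t) e^{2imβt}` over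
the whole line. In polar coordinates `u` is, up to a constant, the Fourier transform of
`ω₊³ χ(ω)²`, so Fourier inversion gives `Re d_m = (2mβ)₊³ χ(2mβ)² / (3π)`: it vanishes for
`m = 0, -1` and is positive for `m = 1` as soon as `χ(2β) ≠ 0`. Inversion is legitimate because
`ω₊³` is `C²`, which makes `u` decay like `t⁻²`. In matrix entries, `L` scales the two off-diagonal
entries by conjugate factors of real part `-(Re d₁ + 2 Re d₀ + Re d₋₁)`, and when `Re d₋₁ = 0` it
multiplies the projection `(σ(0) + I) / 2` by `-2 Re d₁`.
-/

open scoped FourierTransform ComplexConjugate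

section FourierInversion

variable {E : Type*} [NormedAddCommGroup E] [NormedSpace ℂ E]

theorem norm_fourier_le_integral_norm (f : ℝ → E) (x : ℝ) : ‖𝓕 f x‖ ≤ ∫ v, ‖f v‖ :=
  VectorFourier.norm_fourierIntegral_le_integral_norm _ _ _ _ _

theorem sq_mul_norm_fourier_le {f f' f'' : ℝ → E} (hf : ∀ x, HasDerivAt f (f' x) x)
    (hf' : ∀ x, HasDerivAt f' (f'' x) x) (hi : Integrable f) (hi' : Integrable f')
    (hi'' : Integrable f'') (x : ℝ) : (2 * Real.pi * x) ^ 2 * ‖𝓕 f x‖ ≤ ∫ v, ‖f'' v‖ := by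
  have hd : deriv f = f' := funext fun y => (hf y).deriv
  have hd' : deriv f' = f'' := funext fun y => (hf' y).deriv
  have h : 𝓕 f' = _ := hd ▸ Real.fourier_deriv hi (fun y => (hf y).differentiableAt) (hd ▸ hi')
  have h' : 𝓕 f'' = _ :=
    hd' ▸ Real.fourier_deriv hi' (fun y => (hf' y).differentiableAt) (hd' ▸ hi'')
  have hnorm : ‖2 * Real.pi * I * x‖ ^ 2 = (2 * Real.pi * x) ^ 2 := by
    simp [mul_pow]
  calc (2 * Real.pi * x) ^ 2 * ‖𝓕 f x‖ = ‖𝓕 f'' x‖ := by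
        rw [h', h, norm_smul, norm_smul, ← mul_assoc, ← sq, hnorm]
    _ ≤ ∫ v, ‖f'' v‖ := norm_fourier_le_integral_norm f'' x

theorem integrable_fourier_of_hasDerivAt {f f' f'' : ℝ → E} (hf : ∀ x, HasDerivAt f (f' x) x)
    (hf' : ∀ x, HasDerivAt f' (f'' x) x) (hi : Integrable f) (hi' : Integrable f')
    (hi'' : Integrable f'') : Integrable (𝓕 f) := by
  have hcont : Continuous (𝓕 f) :=
    VectorFourier.fourierIntegral_continuous Real.continuous_fourierChar continuous_inner hi
  have hbound (x : ℝ) :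
      ‖𝓕 f x‖ ≤ ((∫ v, ‖f v‖) + ∫ v, ‖f'' v‖) * (1 + (2 * Real.pi * x) ^ 2)⁻¹ := by
    rw [← div_eq_mul_inv, le_div_iff₀ (by positivity)]
    linarith [norm_fourier_le_integral_norm f x, sq_mul_norm_fourier_le hf hf' hi hi' hi'' x]
  exact ((integrable_inv_one_add_sq.comp_mul_left' Real.two_pi_pos.ne').const_mul _).mono'
    hcont.aestronglyMeasurable (.of_forall hbound)

theorem integrable_cexp_smul_fourier_div_two_pi {f : ℝ → E} (hf : Integrable (𝓕 f)) (ω : ℝ) :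
    Integrable fun t : ℝ => cexp (ω * t * I) • 𝓕 f (t / (2 * Real.pi)) := by
  refine (hf.comp_div Real.two_pi_pos.ne').bdd_smul 1
    (Continuous.aestronglyMeasurable (by fun_prop)) (.of_forall fun t => ?_)
  rw [← ofReal_mul, norm_exp_ofReal_mul_I]

theorem integral_cexp_smul_fourier_div_two_pi [CompleteSpace E] {f : ℝ → E} (hc : Continuous f)
    (hi : Integrable f) (hf : Integrable (𝓕 f)) (ω : ℝ) :
    ∫ t : ℝ, cexp (ω * t * I) • 𝓕 f (t / (2 * Real.pi)) = (2 * Real.pi) • f ω := by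
  have hinv : ∫ s : ℝ, cexp (ω * (2 * Real.pi * s : ℝ) * I) • 𝓕 f s = f ω := by
    rw [← congrFun (hc.fourierInv_fourier_eq hi hf) ω, Real.fourierInv_eq']
    congr! 5 with s
    simp only [RCLike.inner_apply, conj_trivial]
    push_cast
    ring
  have hscale := Measure.integral_comp_div
    (fun s : ℝ => cexp (ω * (2 * Real.pi * s : ℝ) * I) • 𝓕 f s) (2 * Real.pi)
  simp only [mul_div_cancel₀ _ Real.two_pi_pos.ne'] at hscale
  rw [hscale, hinv, abs_of_pos Real.two_pi_pos]

end FourierInversion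

theorem integral_eq_two_mul_re_integral_Ioi {F : ℝ → ℂ} (hF : Integrable F)
    (hconj : ∀ t, F (-t) = conj (F t)) : ∫ t, F t = (2 * (∫ t in Set.Ioi 0, F t).re : ℝ) := by
  have hneg : ∫ t in Set.Iic 0, F t = conj (∫ t in Set.Ioi 0, F t) := by
    rw [← neg_zero, ← integral_comp_neg_Ioi, neg_zero, ← integral_conj]
    simp only [hconj]
  rw [← intervalIntegral.integral_Iic_add_Ioi (b := 0) hF.integrableOn hF.integrableOn, hneg,
    add_comm, add_conj]

section PosPowMul

variable {E : Type*} [NormedAddCommGroup E] [NormedSpace ℝ E]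

/-- The function `r ↦ r₊ⁿ f(r)`. It extends a radial density on `(0, ∞)` to the whole line, so that
half-line integrals of the density become Fourier transforms. -/
def posPowMul (n : ℕ) (f : ℝ → E) (r : ℝ) : E := r⁺ ^ n • f r

theorem hasDerivAt_posPart_pow (n : ℕ) (x : ℝ) :
    HasDerivAt (fun r : ℝ => r⁺ ^ (n + 2)) ((n + 2) * x⁺ ^ (n + 1)) x := by
  have hcont (k : ℕ) : Continuous fun r : ℝ => r⁺ ^ k := continuous_posPart.pow k
  refine hasDerivAt_of_hasDerivAt_of_ne' (x := 0) (g := fun y => (n + 2) * y⁺ ^ (n + 1))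
    (fun y hy => ?_) (hcont _).continuousAt ((hcont _).const_mul _).continuousAt x
  rcases hy.lt_or_gt with hneg | hpos
  · have hzero : (fun r : ℝ => r⁺ ^ (n + 2)) =ᶠ[nhds y] fun _ => 0 := by
      filter_upwards [gt_mem_nhds hneg] with r hr
      simp [posPart_eq_zero.2 hr.le]
    simpa [posPart_eq_zero.2 hneg.le] using (hasDerivAt_const y (0 : ℝ)).congr_of_eventuallyEq hzero
  · have hpow : (fun r : ℝ => r⁺ ^ (n + 2)) =ᶠ[nhds y] fun r => r ^ (n + 2) := by
      filter_upwards [lt_mem_nhds hpos] with r hr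
      rw [posPart_eq_self.2 hr.le]
    simpa [posPart_eq_self.2 hpos.le] using
      (hasDerivAt_pow (n + 2) y).congr_of_eventuallyEq hpow

theorem hasDerivAt_posPowMul {f : ℝ → E} {f' : E} {x : ℝ} (n : ℕ) (hf : HasDerivAt f f' x) :
    HasDerivAt (posPowMul (n + 2) f)
      ((n + 2 : ℝ) • posPowMul (n + 1) f x + x⁺ ^ (n + 2) • f') x := by
  simpa only [posPowMul, smul_smul, add_comm] using! (hasDerivAt_posPart_pow n x).smul hf

theorem continuous_posPowMul (n : ℕ) {f : ℝ → E} (hf : Continuous f) :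
    Continuous (posPowMul n f) :=
  (continuous_posPart.pow n).smul hf

theorem integrable_posPowMul (n : ℕ) (f : SchwartzMap ℝ E) : Integrable (posPowMul n f) := by
  refine (f.integrable_pow_mul volume n).mono'
    (continuous_posPowMul n f.continuous).aestronglyMeasurable (.of_forall fun r => ?_)
  rw [posPowMul, norm_smul, norm_pow, Real.norm_of_nonneg (posPart_nonneg r)]
  gcongr
  exact sup_le (le_abs_self r) (abs_nonneg r)

end PosPowMul

theorem integrable_fourier_posPowMul {E : Type*} [NormedAddCommGroup E] [NormedSpace ℂ E]
    (n : ℕ) (f : SchwartzMap ℝ E) : Integrable (𝓕 (posPowMul (n + 3) f)) := by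
  set f' := SchwartzMap.derivCLM ℝ E f
  set f'' := SchwartzMap.derivCLM ℝ E f'
  have hf (x : ℝ) : HasDerivAt f (f' x) x := f.differentiableAt.hasDerivAt
  have hf' (x : ℝ) : HasDerivAt f' (f'' x) x := f'.differentiableAt.hasDerivAt
  refine integrable_fourier_of_hasDerivAt
    (fun x => hasDerivAt_posPowMul (n + 1) (hf x))
    (fun x => ((hasDerivAt_posPowMul n (hf x)).const_smul _).add
      (hasDerivAt_posPowMul (n + 1) (hf' x)))
    (integrable_posPowMul _ f) ?_ ?_
  · exact ((integrable_posPowMul _ f).smul _).add (integrable_posPowMul _ f')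
  · exact ((((integrable_posPowMul _ f).smul _).add (integrable_posPowMul _ f')).smul _).add
      (((integrable_posPowMul _ f').smul _).add (integrable_posPowMul _ f''))

/-- The square of a real Schwartz function, as a complex-valued Schwartz function. -/
def ofRealSq (χ : SchwartzMap ℝ ℝ) : SchwartzMap ℝ ℂ :=
  SchwartzMap.postcompCLM (𝕜 := ℝ) ofRealCLM (SchwartzMap.smulLeftCLM ℝ χ χ)

theorem ofRealSq_apply (χ : SchwartzMap ℝ ℝ) (r : ℝ) : ofRealSq χ r = ((χ r ^ 2 : ℝ) : ℂ) := by
  rw [ofRealSq, SchwartzMap.postcompCLM_apply,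
    SchwartzMap.smulLeftCLM_apply_apply χ.hasTemperateGrowth, smul_eq_mul, ← sq, ofRealCLM_apply]

theorem integral_fun_norm_euclideanSpace_fin_three {E : Type*} [NormedAddCommGroup E]
    [NormedSpace ℝ E] (f : ℝ → E) :
    ∫ k : EuclideanSpace ℝ (Fin 3), f ‖k‖ =
      (4 * Real.pi) • ∫ r in Set.Ioi (0 : ℝ), r ^ 2 • f r := by
  have hball : volume.real (Metric.ball (0 : EuclideanSpace ℝ (Fin 3)) 1) = Real.pi * 4 / 3 := by
    rw [measureReal_def, EuclideanSpace.volume_ball_fin_three, ENNReal.ofReal_one, one_pow, one_mul,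
      ENNReal.toReal_ofReal (by positivity)]
  rw [integral_fun_norm_addHaar volume f, hball, finrank_euclideanSpace_fin,
    ← Nat.cast_smul_eq_nsmul ℝ, smul_smul]
  congr 1
  push_cast
  ring

theorem fourier_posPowMul {E : Type*} [NormedAddCommGroup E] [NormedSpace ℂ E]
    (n : ℕ) (hn : n ≠ 0) (f : ℝ → E) (t : ℝ) :
    𝓕 (posPowMul n f) (t / (2 * Real.pi)) =
      ∫ r in Set.Ioi (0 : ℝ), cexp (-(t * r) * I) • r ^ n • f r := by
  rw [Real.fourier_real_eq_integral_exp_smul, ← integral_indicator measurableSet_Ioi]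
  congr! 2 with r
  by_cases hr : 0 < r
  · have hphase : -2 * Real.pi * r * (t / (2 * Real.pi)) = -(t * r) := by
      field_simp
    rw [Set.indicator_of_mem (Set.mem_Ioi.2 hr), posPowMul, posPart_eq_self.2 hr.le, hphase]
    push_cast
    rfl
  · rw [Set.indicator_of_notMem (by simpa using hr), posPowMul, posPart_eq_zero.2 (not_lt.1 hr),
      zero_pow hn, zero_smul, smul_zero]

theorem u_eq_fourier (χ : SchwartzMap ℝ ℝ) (t : ℝ) :
    u χ t = (1 / (3 * Real.pi ^ 2) : ℝ) * 𝓕 (posPowMul 3 (ofRealSq χ)) (t / (2 * Real.pi)) := by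
  have hradial := integral_fun_norm_euclideanSpace_fin_three
    fun r => ((χ r ^ 2 * r : ℝ) : ℂ) * cexp (-(t * r) * I)
  have hconst : 2 / (3 * (2 * Real.pi) ^ 3) * (4 * Real.pi) = 1 / (3 * Real.pi ^ 2) := by
    field_simp
    norm_num
  rw [u, hradial, fourier_posPowMul 3 three_ne_zero, real_smul, ← mul_assoc, ← ofReal_mul, hconst]
  congr! 3 with r
  simp only [ofRealSq_apply, real_smul, smul_eq_mul]
  push_cast
  ring

theorem u_neg (χ : SchwartzMap ℝ ℝ) (t : ℝ) : u χ (-t) = conj (u χ t) := by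
  rw [u, u, map_mul, conj_ofReal, ← integral_conj]
  congr! 3
  simp [← exp_conj]

theorem re_integral_Ioi_u_mul_cexp (χ : SchwartzMap ℝ ℝ) (ω : ℝ) :
    (∫ t in Set.Ioi 0, u χ t * cexp (ω * t * I)).re = ω⁺ ^ 3 * χ ω ^ 2 / (3 * Real.pi) := by
  have hu (t : ℝ) : u χ t * cexp (ω * t * I) = (1 / (3 * Real.pi ^ 2) : ℝ) *
      (cexp (ω * t * I) • 𝓕 (posPowMul 3 (ofRealSq χ)) (t / (2 * Real.pi))) := by
    rw [u_eq_fourier, smul_eq_mul]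
    ring
  have hfourier := integrable_fourier_posPowMul 0 (ofRealSq χ)
  have hint : Integrable fun t : ℝ => u χ t * cexp (ω * t * I) := by
    simp only [hu]
    exact (integrable_cexp_smul_fourier_div_two_pi hfourier ω).const_mul _
  have hconj (t : ℝ) : u χ (-t) * cexp (ω * (-t : ℝ) * I) = conj (u χ t * cexp (ω * t * I)) := by
    simp [u_neg, ← exp_conj]
  have hline : ∫ t : ℝ, u χ t * cexp (ω * t * I) =
      (2 * (ω⁺ ^ 3 * χ ω ^ 2 / (3 * Real.pi)) : ℝ) := by
    simp only [hu]
    rw [integral_const_mul, integral_cexp_smul_fourier_div_two_pi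
      (continuous_posPowMul 3 (ofRealSq χ).continuous) (integrable_posPowMul 3 _) hfourier,
      posPowMul, ofRealSq_apply, real_smul, real_smul]
    norm_cast
    field_simp
  have hhalf := integral_eq_two_mul_re_integral_Ioi hint hconj
  rw [hline] at hhalf
  linarith [ofReal_injective hhalf]

theorem dcoef_re (χ : SchwartzMap ℝ ℝ) (β : ℝ) (m : ℤ) :
    (dcoef χ β m).re = (2 * m * β)⁺ ^ 3 * χ (2 * m * β) ^ 2 / (3 * Real.pi) := by
  rw [← re_integral_Ioi_u_mul_cexp, dcoef]
  push_cast
  rfl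

theorem dcoef_re_nonneg (χ : SchwartzMap ℝ ℝ) (β : ℝ) (m : ℤ) : 0 ≤ (dcoef χ β m).re := by
  rw [dcoef_re]
  positivity

theorem dcoef_re_eq_zero (χ : SchwartzMap ℝ ℝ) {β : ℝ} {m : ℤ} (h : m * β ≤ 0) :
    (dcoef χ β m).re = 0 := by
  rw [dcoef_re, posPart_eq_zero.2 (by linarith)]
  simp

theorem dcoef_re_pos {χ : SchwartzMap ℝ ℝ} {β : ℝ} {m : ℤ} (h : 0 < m * β)
    (hχ : χ (2 * m * β) ≠ 0) : 0 < (dcoef χ β m).re := by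
  have hpos : 0 < 2 * m * β := by linarith
  rw [dcoef_re, posPart_eq_self.2 hpos.le]
  positivity

theorem ofReal_sqrt_two_mul_self : (√2 : ℂ) * √2 = 2 := by
  norm_cast
  simp

theorem inv_ofReal_sqrt_two_mul_two : (√2 : ℂ)⁻¹ * 2 = √2 := by
  rw [← ofReal_sqrt_two_mul_self, inv_mul_cancel_left₀ (by simp)]

theorem pσ_one : pσ 1 = !![0, (√2 : ℂ); 0, 0] := by
  ext i j
  fin_cases i <;> fin_cases j <;> simp [pσ, σ1, σ2, one_add_one_eq_two, inv_ofReal_sqrt_two_mul_two]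

theorem pσ_zero : pσ 0 = !![1, 0; 0, -1] := by
  simp [pσ, σ3]

theorem pσ_neg_one : pσ (-1) = !![0, 0; (√2 : ℂ), 0] := by
  ext i j
  fin_cases i <;> fin_cases j <;> simp [pσ, σ1, σ2, one_add_one_eq_two, inv_ofReal_sqrt_two_mul_two]

theorem pσ_one_mul_mul_pσ_neg_one (A : Matrix (Fin 2) (Fin 2) ℂ) :
    pσ 1 * A * pσ (-1) = !![2 * A 1 1, 0; 0, 0] := by
  rw [A.eta_fin_two, pσ_one, pσ_neg_one]
  ext i j
  fin_cases i <;> fin_cases j <;> simp [mul_right_comm _ (A _ _), ofReal_sqrt_two_mul_self]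

theorem pσ_neg_one_mul_mul_pσ_one (A : Matrix (Fin 2) (Fin 2) ℂ) :
    pσ (-1) * A * pσ 1 = !![0, 0; 0, 2 * A 0 0] := by
  rw [A.eta_fin_two, pσ_one, pσ_neg_one]
  ext i j
  fin_cases i <;> fin_cases j <;> simp [mul_right_comm _ (A _ _), ofReal_sqrt_two_mul_self]

/-- The eigenvalue of `Lop` on the coherence `σ(1)`; its conjugate is the eigenvalue on `σ(-1)`. -/
def coherenceEigenvalue (d1 d0 dm1 : ℂ) : ℂ :=
  -(d1.re + 2 * d0.re + dm1.re) + I * (d1.im - dm1.im)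

theorem coherenceEigenvalue_re (d1 d0 dm1 : ℂ) :
    (coherenceEigenvalue d1 d0 dm1).re = -(d1.re + 2 * d0.re + dm1.re) := by
  simp [coherenceEigenvalue]

theorem Lop_apply (d1 d0 dm1 : ℂ) (A : Matrix (Fin 2) (Fin 2) ℂ) :
    Lop d1 d0 dm1 A =
      !![2 * d1.re * (A 1 1 - A 0 0), coherenceEigenvalue d1 d0 dm1 * A 0 1;
        conj (coherenceEigenvalue d1 d0 dm1) * A 1 0, 2 * dm1.re * (A 0 0 - A 1 1)] := by
  have hpσ : pσ 1 * pσ (-1) = !![2, 0; 0, 0] := by simpa using pσ_one_mul_mul_pσ_neg_one 1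
  have hpσ' : pσ (-1) * pσ 1 = !![0, 0; 0, 2] := by simpa using pσ_neg_one_mul_mul_pσ_one 1
  rw [Lop, HL, pσ_one_mul_mul_pσ_neg_one, pσ_neg_one_mul_mul_pσ_one, hpσ, hpσ', pσ_zero,
    A.eta_fin_two]
  ext i j
  fin_cases i <;> fin_cases j <;> simp [coherenceEigenvalue, conj_ofNat] <;> ring

theorem Lop_one (d1 d0 dm1 : ℂ) : Lop d1 d0 dm1 1 = 0 := by
  simp [Lop_apply, ← Matrix.ext_iff, Fin.forall_fin_two]

theorem Lop_pσ_one (d1 d0 dm1 : ℂ) :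
    Lop d1 d0 dm1 (pσ 1) = coherenceEigenvalue d1 d0 dm1 • pσ 1 := by
  simp [Lop_apply, pσ_one]

theorem Lop_pσ_neg_one (d1 d0 dm1 : ℂ) :
    Lop d1 d0 dm1 (pσ (-1)) = conj (coherenceEigenvalue d1 d0 dm1) • pσ (-1) := by
  simp [Lop_apply, pσ_neg_one]

theorem Lop_pσ_zero_add_one (d1 d0 : ℂ) {dm1 : ℂ} (h : dm1.re = 0) :
    Lop d1 d0 dm1 (pσ 0 + 1) = ((-2 * d1.re : ℝ) : ℂ) • (pσ 0 + 1) := by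
  rw [Lop_apply, pσ_zero, Matrix.one_fin_two, h]
  ext i j
  fin_cases i <;> fin_cases j <;> simp [one_add_one_eq_two, mul_comm]

theorem stmt11_general (χ : SchwartzMap ℝ ℝ) (β : ℝ) (hβ : 0 < β) :
    Lop (dcoef χ β 1) (dcoef χ β 0) (dcoef χ β (-1)) 1 = 0 ∧
      ∃ μ1 μ0 μm1 : ℂ,
        Lop (dcoef χ β 1) (dcoef χ β 0) (dcoef χ β (-1)) (pσ 1) = μ1 • pσ 1 ∧
        Lop (dcoef χ β 1) (dcoef χ β 0) (dcoef χ β (-1)) (pσ 0 + 1) = μ0 • (pσ 0 + 1) ∧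
        Lop (dcoef χ β 1) (dcoef χ β 0) (dcoef χ β (-1)) (pσ (-1)) = μm1 • pσ (-1) ∧
        μ1.re ≤ 0 ∧ μ0.re ≤ 0 ∧ μm1.re ≤ 0 ∧
        (χ (2 * β) ≠ 0 → μ1.re < 0 ∧ μ0.re < 0 ∧ μm1.re < 0) := by
  set d1 := dcoef χ β 1
  set d0 := dcoef χ β 0
  set dm1 := dcoef χ β (-1)
  have hd1 : 0 ≤ d1.re := dcoef_re_nonneg χ β 1
  have hd0 : d0.re = 0 := dcoef_re_eq_zero χ (by simp)
  have hdm1 : dm1.re = 0 := dcoef_re_eq_zero χ (by simpa using hβ.le)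
  have hre : (coherenceEigenvalue d1 d0 dm1).re = -d1.re := by
    simp [coherenceEigenvalue_re, hd0, hdm1]
  refine ⟨Lop_one .., _, _, _, Lop_pσ_one .., Lop_pσ_zero_add_one _ _ hdm1, Lop_pσ_neg_one .., ?_⟩
  rw [conj_re, ofReal_re, hre]
  refine ⟨by linarith, by linarith, by linarith, fun hχ => ?_⟩
  have hd1_pos : 0 < d1.re := dcoef_re_pos (by simpa using hβ) (by simpa using hχ)
  exact ⟨by linarith, by linarith, by linarith⟩

theorem stmt11 (χ : SchwartzMap ℝ ℝ) (β : ℝ) (hβ : 0 < β) :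
    Lop (dcoef χ β 1) (dcoef χ β 0) (dcoef χ β (-1)) 1 = 0 ∧
      ∃ μ1 μ0 μm1 : ℂ,
        Lop (dcoef χ β 1) (dcoef χ β 0) (dcoef χ β (-1)) (pσ 1) = μ1 • pσ 1 ∧
        Lop (dcoef χ β 1) (dcoef χ β 0) (dcoef χ β (-1)) (pσ 0 + 1) = μ0 • (pσ 0 + 1) ∧
        Lop (dcoef χ β 1) (dcoef χ β 0) (dcoef χ β (-1)) (pσ (-1)) = μm1 • pσ (-1) ∧
        μ1.re ≤ 0 ∧ μ0.re ≤ 0 ∧ μm1.re ≤ 0 ∧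
        (0 < χ (2 * β) → μ1.re < 0 ∧ μ0.re < 0 ∧ μm1.re < 0) := by
  obtain ⟨hone, μ1, μ0, μm1, h1, h0, hm1, hμ1, hμ0, hμm1, hneg⟩ := stmt11_general χ β hβ
  exact ⟨hone, μ1, μ0, μm1, h1, h0, hm1, hμ1, hμ0, hμm1, fun hχ => hneg hχ.ne'⟩
end
end
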